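/- Let X be one of the properties: Pareto optimal, rank-maximal, max-cardinality rank-maximal, fair. (i) There exist a constant c > 0 and n_0 such that for every n ≥ n_0 and every function f assigning to each instance I with n agents and n objects a matching f(I) of G_I satisfying X, there exist an instance I with n agents and n objects and a unit-range valuation profile v consistent with I such that max{SW(μ' | v) : μ' a matching of G_I satisfying X} ≥ c·n·SW(f(I) | v). (ii) This bound is asymptotically tight: for every instance I with n ≥ 2 agents and n objects, every matching μ of G_I satisfying X, and every unit-range valuation profile v consistent with I, max{SW(μ' | v) : μ' a matching of G_I satisfying X} ≤ n·SW(μ | v). -/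

import Mathlib

open Finset
open scoped Classical

/-- A one-sided matching instance with `n` agents and `n` objects.  Agent `i` has a
nonempty acceptable set `accept i` and a weak order `pref i` on it
(`pref i h h'` means agent `i` weakly prefers object `h` to object `h'`). -/
structure OSMInstance (n : ℕ) where
  accept : Fin n → Finset (Fin n)
  accept_nonempty : ∀ i, (accept i).Nonempty
  pref : Fin n → Fin n → Fin n → Prop
  pref_refl : ∀ i h, h ∈ accept i → pref i h h
  pref_trans : ∀ i h₁ h₂ h₃, h₁ ∈ accept i → h₂ ∈ accept i → h₃ ∈ accept i →
    pref i h₁ h₂ → pref i h₂ h₃ → pref i h₁ h₃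
  pref_total : ∀ i h₁ h₂, h₁ ∈ accept i → h₂ ∈ accept i → pref i h₁ h₂ ∨ pref i h₂ h₁

namespace OSMInstance

variable {n : ℕ}

/-- Agent `i` strictly prefers object `h` to object `h'`. -/
def strictPref (I : OSMInstance n) (i h h' : Fin n) : Prop :=
  I.pref i h h' ∧ ¬ I.pref i h' h

/-- The rank of the edge `(i, h)` of `G_I`: one plus the number of acceptable objects
that agent `i` strictly prefers to `h`. -/
noncomputable def edgeRank (I : OSMInstance n) (e : Fin n × Fin n) : ℕ :=
  ((I.accept e.1).filter (fun h' => I.strictPref e.1 h' e.2)).card + 1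

/-- A matching of `G_I`: a set of acceptable (agent, object) pairs in which every agent
and every object occurs at most once. -/
def IsMatching (I : OSMInstance n) (μ : Finset (Fin n × Fin n)) : Prop :=
  (∀ e ∈ μ, e.2 ∈ I.accept e.1) ∧
  (∀ e ∈ μ, ∀ e' ∈ μ, e.1 = e'.1 → e = e') ∧
  (∀ e ∈ μ, ∀ e' ∈ μ, e.2 = e'.2 → e = e')

/-- Total weight of a set of edges under the edge weights `w`. -/
def weightSum (w : Fin n × Fin n → ℝ) (μ : Finset (Fin n × Fin n)) : ℝ :=
  ∑ e ∈ μ, w e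

/-- Social welfare of the set of edges `μ` under the valuation profile `v`. -/
def SW (_I : OSMInstance n) (v : Fin n → Fin n → ℝ) (μ : Finset (Fin n × Fin n)) : ℝ :=
  ∑ e ∈ μ, v e.1 e.2

/-- `μ` is a maximum-weight matching of `G_I` with respect to edge weights `w`. -/
def IsMaxWeightMatching (I : OSMInstance n) (w : Fin n × Fin n → ℝ)
    (μ : Finset (Fin n × Fin n)) : Prop :=
  I.IsMatching μ ∧ ∀ μ', I.IsMatching μ' → weightSum w μ' ≤ weightSum w μ

/-- `μ` is a priority-`p` matching: a maximum-weight matching when every rank-`r` edge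
gets weight `p r`. -/
noncomputable def IsPriorityMatching (I : OSMInstance n) (p : ℕ → ℝ)
    (μ : Finset (Fin n × Fin n)) : Prop :=
  I.IsMaxWeightMatching (fun e => p (I.edgeRank e)) μ

/-- `v` is a valuation profile consistent with the instance: values lie in `[0,1]`,
unacceptable objects have value `0`, and on acceptable objects the values represent
the weak order. -/
def Consistent (I : OSMInstance n) (v : Fin n → Fin n → ℝ) : Prop :=
  (∀ i h, 0 ≤ v i h ∧ v i h ≤ 1) ∧
  (∀ i h, h ∉ I.accept i → v i h = 0) ∧
  (∀ i h h', h ∈ I.accept i → h' ∈ I.accept i → (I.pref i h h' ↔ v i h' ≤ v i h))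

/-- Unit-sum valuations: each agent's values over acceptable objects sum to `1`. -/
def UnitSum (I : OSMInstance n) (v : Fin n → Fin n → ℝ) : Prop :=
  ∀ i, ∑ h ∈ I.accept i, v i h = 1

/-- Unit-range valuations: each agent values some acceptable object `1`, some
acceptable object `0`, and has two non-equivalent acceptable objects. -/
def UnitRange (I : OSMInstance n) (v : Fin n → Fin n → ℝ) : Prop :=
  ∀ i, (∃ h ∈ I.accept i, v i h = 1) ∧ (∃ h ∈ I.accept i, v i h = 0) ∧
    ∃ h ∈ I.accept i, ∃ h' ∈ I.accept i, I.strictPref i h h'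

/-- Agent `i` is unmatched in `μ`. -/
def Unmatched (_I : OSMInstance n) (μ : Finset (Fin n × Fin n)) (i : Fin n) : Prop :=
  ∀ h, (i, h) ∉ μ

/-- Agent `i` weakly prefers their allocation in `μ'` to their allocation in `μ`
(being unmatched is strictly worse than receiving any acceptable object). -/
def WeakImprove (I : OSMInstance n) (μ' μ : Finset (Fin n × Fin n)) (i : Fin n) : Prop :=
  I.Unmatched μ i ∨ ∃ h h', (i, h) ∈ μ ∧ (i, h') ∈ μ' ∧ I.pref i h' h

/-- Agent `i` strictly prefers their allocation in `μ'` to their allocation in `μ`. -/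
def StrictImprove (I : OSMInstance n) (μ' μ : Finset (Fin n × Fin n)) (i : Fin n) : Prop :=
  (I.Unmatched μ i ∧ ∃ h', (i, h') ∈ μ') ∨
    ∃ h h', (i, h) ∈ μ ∧ (i, h') ∈ μ' ∧ I.strictPref i h' h

/-- `μ` is a Pareto optimal matching of `G_I`. -/
def ParetoOptimal (I : OSMInstance n) (μ : Finset (Fin n × Fin n)) : Prop :=
  I.IsMatching μ ∧
    ¬ ∃ μ', I.IsMatching μ' ∧ (∀ i, I.WeakImprove μ' μ i) ∧ ∃ i, I.StrictImprove μ' μ i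

/-- `sig I μ r` is the number of rank-`r` edges of `μ` (as an integer). -/
noncomputable def sig (I : OSMInstance n) (μ : Finset (Fin n × Fin n)) (r : ℕ) : ℤ :=
  ((μ.filter (fun e => I.edgeRank e = r)).card : ℤ)

end OSMInstance

/-- Lexicographic comparison `f ≤ g` of the length-`len` tuples `(f 0, …, f (len-1))`
and `(g 0, …, g (len-1))`. -/
def LexLe (len : ℕ) (f g : ℕ → ℤ) : Prop :=
  (∀ j < len, f j = g j) ∨ ∃ j < len, (∀ i < j, f i = g i) ∧ f j < g j

namespace OSMInstance

variable {n : ℕ}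

/-- `μ` is a rank-maximal matching: it lexicographically maximizes `(s_1, …, s_n)`. -/
noncomputable def RankMaximal (I : OSMInstance n) (μ : Finset (Fin n × Fin n)) : Prop :=
  I.IsMatching μ ∧ ∀ μ', I.IsMatching μ' →
    LexLe n (fun j => I.sig μ' (j + 1)) (fun j => I.sig μ (j + 1))

/-- `μ` is a max-cardinality rank-maximal matching: it lexicographically maximizes
`(Σ_i s_i, s_1, …, s_n)`. -/
noncomputable def MaxCardRankMaximal (I : OSMInstance n) (μ : Finset (Fin n × Fin n)) : Prop :=
  I.IsMatching μ ∧ ∀ μ', I.IsMatching μ' →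
    LexLe (n + 1) (fun j => if j = 0 then (μ'.card : ℤ) else I.sig μ' j)
      (fun j => if j = 0 then (μ.card : ℤ) else I.sig μ j)

/-- `μ` is a fair matching: it lexicographically maximizes
`(Σ_i s_i, -s_n, -s_(n-1), …, -s_1)`. -/
noncomputable def FairMatching (I : OSMInstance n) (μ : Finset (Fin n × Fin n)) : Prop :=
  I.IsMatching μ ∧ ∀ μ', I.IsMatching μ' →
    LexLe (n + 1) (fun j => if j = 0 then (μ'.card : ℤ) else -I.sig μ' (n + 1 - j))
      (fun j => if j = 0 then (μ.card : ℤ) else -I.sig μ (n + 1 - j))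

end OSMInstance

/-- The priority vector for rank-maximal matchings: a rank-`r` edge gets weight
`n ^ (2 * (n - r + 1))`. -/
noncomputable def pRankMaximal (n : ℕ) : ℕ → ℝ :=
  fun r => (n : ℝ) ^ (2 * (n - r + 1))

/-- The priority vector for max-cardinality rank-maximal matchings: a rank-`r` edge gets
weight `n ^ (2 * n) + n ^ (2 * (n - r))`. -/
noncomputable def pMaxCardRankMaximal (n : ℕ) : ℕ → ℝ :=
  fun r => (n : ℝ) ^ (2 * n) + (n : ℝ) ^ (2 * (n - r))

/-- The priority vector for fair matchings: a rank-`r` edge gets weight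
`4 * n ^ (2 * n) - 2 * n ^ (r - 1)`. -/
noncomputable def pFairVec (n : ℕ) : ℕ → ℝ :=
  fun r => 4 * (n : ℝ) ^ (2 * n) - 2 * (n : ℝ) ^ (r - 1)

/-- The set `𝕡` of the three priority vectors of interest. -/
noncomputable def PrioritySet (n : ℕ) : Set (ℕ → ℝ) :=
  {pRankMaximal n, pMaxCardRankMaximal n, pFairVec n}

/-- The four matching properties considered: Pareto optimal, rank-maximal,
max-cardinality rank-maximal, and fair. -/
inductive MatchProp where
  | po | rm | mcrm | fair

/-- `μ` satisfies the property `X` with respect to the instance `I`. -/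
noncomputable def SatisfiesProp {n : ℕ} (X : MatchProp) (I : OSMInstance n)
    (μ : Finset (Fin n × Fin n)) : Prop :=
  match X with
  | .po => I.ParetoOptimal μ
  | .rm => I.RankMaximal μ
  | .mcrm => I.MaxCardRankMaximal μ
  | .fair => I.FairMatching μ

/-!
Upper bound. A Pareto improvement weakly decreases the rank of every agent. The smallest rank
reached by an improving agent, or the largest rank left by one, is then the first place where the
numbers of agents per rank change, and the change is favourable; so each of the three signature
properties implies Pareto optimality. In a Pareto optimal matching some agent holds a favourite
object: otherwise let every agent point to the holder of one of its favourites; either some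
favourite is free, or the pointers contain cycles along which the agents can trade. This agent alone
contributes `1`, while no matching has welfare above `n`.

Lower bound. Let all agents share a ranking with one top object, about `n / 2` equivalent middle
objects and the remaining ones at the bottom. All perfect matchings then have the same, largest
possible signature, so they have all four properties. Once the algorithm has chosen a matching, let
the agents holding a middle object value the middle tier at `1 / n` and the others at `1 / 2`: the
chosen matching has welfare at most `2`, while giving the middle objects to the other agents yields
about `n / 4`.
-/

section Order

theorem exists_card_fiber_lt {ι β : Type*} [Fintype ι] [LinearOrder β] {r r' : ι → β}
    (h : r' < r) :
    ∃ i, r' i < r i ∧ (∀ b < r' i, #{x | r' x = b} = #{x | r x = b}) ∧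
      #{x | r x = r' i} < #{x | r' x = r' i} := by
  obtain ⟨hle, hlt⟩ := Pi.lt_def.mp h
  obtain ⟨i, hi, hmin⟩ := exists_min_image ({x | r' x < r x} : Finset ι) r'
    (by simpa [Finset.Nonempty] using hlt)
  simp only [mem_filter_univ] at hi hmin
  have heq_of_lt (x : ι) (hx : r x ≤ r' i) : r' x = r x :=
    (hle x).antisymm (not_lt.mp fun hlt => (hmin x hlt).not_gt (hlt.trans_le hx))
  have heq_of_lt' (x : ι) (hx : r' x < r' i) : r' x = r x :=
    (hle x).antisymm (not_lt.mp fun hlt => (hmin x hlt).not_gt hx)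
  refine ⟨i, hi, fun b hb => ?_, card_lt_card ((ssubset_iff_of_subset ?_).mpr ⟨i, ?_⟩)⟩
  · congr! 2 with x
    grind
  · intro x
    grind
  · simp [hi.ne']

theorem exists_card_fiber_gt {ι β : Type*} [Fintype ι] [LinearOrder β] {r r' : ι → β}
    (h : r' < r) :
    ∃ i, r' i < r i ∧ (∀ b > r i, #{x | r' x = b} = #{x | r x = b}) ∧
      #{x | r' x = r i} < #{x | r x = r i} := by
  obtain ⟨i, hi, heq, hlt⟩ := exists_card_fiber_lt (β := βᵒᵈ) (r := r') (r' := r) h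
  exact ⟨i, hi, fun b hb => (heq b hb).symm, hlt⟩

theorem not_lexLe_of_lt {len k : ℕ} {f g : ℕ → ℤ} (hk : k < len) (heq : ∀ j < k, f j = g j)
    (hlt : g k < f k) : ¬ LexLe len f g := by
  rintro (h | ⟨j, -, hj, hjlt⟩)
  · exact hlt.ne' (h k hk)
  · rcases lt_trichotomy j k with h | rfl | h
    · exact hjlt.ne (heq j h)
    · exact hlt.not_gt hjlt
    · exact hlt.ne' (hj k h)

theorem lexLe_of_le {len : ℕ} {f g : ℕ → ℤ} (h : ∀ j < len, f j ≤ g j) : LexLe len f g := by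
  by_cases hex : ∃ j, j < len ∧ f j ≠ g j
  · obtain ⟨hlen, hne⟩ := Nat.find_spec hex
    refine Or.inr ⟨Nat.find hex, hlen, fun j hj => ?_, (h _ hlen).lt_of_ne hne⟩
    simpa [hj.trans hlen] using Nat.find_min hex hj
  · push Not at hex
    exact Or.inl hex

end Order

theorem periodicPts_nonempty {α : Type*} [Finite α] [Nonempty α] (f : α → α) :
    (Function.periodicPts f).Nonempty := by
  obtain ⟨x⟩ := ‹Nonempty α›
  obtain ⟨a, b, hab, heq⟩ := Finite.exists_ne_map_eq_of_infinite fun k => f^[k] x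
  wlog hlt : a < b generalizing a b
  · exact this b a hab.symm heq.symm (hab.lt_or_gt.resolve_left hlt)
  refine ⟨f^[a] x, Function.mk_mem_periodicPts (Nat.sub_pos_of_lt hlt) ?_⟩
  rw [Function.IsPeriodicPt, Function.IsFixedPt, ← Function.iterate_add_apply,
    Nat.sub_add_cancel hlt.le]
  exact heq.symm

namespace OSMInstance

section Rank

variable {n : ℕ} {I : OSMInstance n} {μ μ' : Finset (Fin n × Fin n)} {i h h' : Fin n}

theorem edgeRank_le {e : Fin n × Fin n} (he : e.2 ∈ I.accept e.1) : I.edgeRank e ≤ n := by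
  have hlt : #{h ∈ I.accept e.1 | I.strictPref e.1 h e.2} < #(univ : Finset (Fin n)) :=
    card_lt_card (ssubset_univ_iff.mpr fun huniv =>
      (mem_filter.mp (huniv ▸ mem_univ e.2)).2.2 (I.pref_refl _ _ he))
  simpa [edgeRank] using hlt

theorem edgeRank_le_of_pref (hh : h ∈ I.accept i) (hh' : h' ∈ I.accept i)
    (hp : I.pref i h' h) : I.edgeRank (i, h') ≤ I.edgeRank (i, h) := by
  refine Nat.succ_le_succ (card_le_card fun x hx => ?_)
  obtain ⟨hx, hxh, hnx⟩ := mem_filter.mp hx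
  exact mem_filter.mpr ⟨hx, I.pref_trans i x h' h hx hh' hh hxh hp,
    fun hhx => hnx (I.pref_trans i h' h x hh' hh hx hp hhx)⟩

theorem edgeRank_lt_of_strictPref (hh : h ∈ I.accept i) (hh' : h' ∈ I.accept i)
    (hp : I.strictPref i h' h) : I.edgeRank (i, h') < I.edgeRank (i, h) := by
  refine Nat.succ_lt_succ (card_lt_card ((ssubset_iff_of_subset fun x hx => ?_).mpr
    ⟨h', mem_filter.mpr ⟨hh', hp⟩, fun hx => (mem_filter.mp hx).2.2 (I.pref_refl _ _ hh')⟩))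
  obtain ⟨hx, hxh, hnx⟩ := mem_filter.mp hx
  exact mem_filter.mpr ⟨hx, I.pref_trans i x h' h hx hh' hh hxh hp.1,
    fun hhx => hnx (I.pref_trans i h' h x hh' hh hx hp.1 hhx)⟩

theorem exists_favourite (I : OSMInstance n) (i : Fin n) :
    ∃ t ∈ I.accept i, ∀ h ∈ I.accept i, I.pref i t h := by
  obtain ⟨t, ht, hmin⟩ := exists_min_image (I.accept i) (fun h => I.edgeRank (i, h))
    (I.accept_nonempty i)
  refine ⟨t, ht, fun h hh => ?_⟩
  by_contra hpref
  have hstrict : I.strictPref i h t := ⟨(I.pref_total i h t hh ht).resolve_right hpref, hpref⟩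
  exact (edgeRank_lt_of_strictPref ht hh hstrict).not_ge (hmin h hh)

/-- The rank of the edge of `μ` at agent `i`.  Unmatched agents get rank `n + 1`, so that ranks
compare as the agent's preferences over allocations do. -/
noncomputable def agentRank (I : OSMInstance n) (μ : Finset (Fin n × Fin n)) (i : Fin n) : ℕ :=
  if h : ∃ h, (i, h) ∈ μ then I.edgeRank (i, h.choose) else n + 1

theorem IsMatching.agentRank_eq (hμ : I.IsMatching μ) {e : Fin n × Fin n} (he : e ∈ μ) :
    I.agentRank μ e.1 = I.edgeRank e := by
  have hex : ∃ h, (e.1, h) ∈ μ := ⟨e.2, he⟩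
  rw [agentRank, dif_pos hex]
  exact congrArg I.edgeRank (hμ.2.1 _ hex.choose_spec e he rfl)

theorem agentRank_of_unmatched (hi : I.Unmatched μ i) : I.agentRank μ i = n + 1 :=
  dif_neg fun ⟨h, hh⟩ => hi h hh

theorem agentRank_pos (I : OSMInstance n) (μ : Finset (Fin n × Fin n)) (i : Fin n) :
    0 < I.agentRank μ i := by
  unfold agentRank
  split <;> exact Nat.succ_pos _

theorem IsMatching.agentRank_le (hμ : I.IsMatching μ) (i : Fin n) :
    I.agentRank μ i ≤ n + 1 := by
  unfold agentRank
  split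
  · next hex => exact (edgeRank_le (hμ.1 _ hex.choose_spec)).trans n.le_succ
  · exact le_rfl

theorem IsMatching.card_filter_edgeRank (hμ : I.IsMatching μ) {p : ℕ → Prop}
    [DecidablePred p] (hp : ¬ p (n + 1)) :
    #{e ∈ μ | p (I.edgeRank e)} = #{i | p (I.agentRank μ i)} := by
  refine card_nbij Prod.fst (fun e he => ?_) (fun e he e' he' => ?_) fun i hi => ?_
  · obtain ⟨he, hpe⟩ := mem_filter.mp he
    simpa [hμ.agentRank_eq he] using hpe
  · exact hμ.2.1 e (mem_filter.mp he).1 e' (mem_filter.mp he').1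
  · replace hi : p (I.agentRank μ i) := by simpa using hi
    obtain ⟨h, hh⟩ : ∃ h, (i, h) ∈ μ := by
      by_contra hun
      exact hp (agentRank_of_unmatched (not_exists.mp hun) ▸ hi)
    exact ⟨(i, h), mem_filter.mpr ⟨hh, hμ.agentRank_eq hh ▸ hi⟩, rfl⟩

theorem IsMatching.sig_eq (hμ : I.IsMatching μ) {r : ℕ} (hr : r ≤ n) :
    I.sig μ r = #{i | I.agentRank μ i = r} :=
  congrArg _ (hμ.card_filter_edgeRank (p := (· = r)) (by omega))

theorem IsMatching.card_add_card_unmatched (hμ : I.IsMatching μ) :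
    #μ + #{i | I.agentRank μ i = n + 1} = n := by
  have hmatched : #μ = #{i | I.agentRank μ i ≠ n + 1} := by
    rw [← hμ.card_filter_edgeRank (p := (· ≠ n + 1)) (by simp), filter_true_of_mem]
    exact fun e he => (Nat.lt_succ_of_le (edgeRank_le (hμ.1 e he))).ne
  rw [hmatched, add_comm, card_filter_add_card_filter_not, card_univ, Fintype.card_fin]

end Rank

section Domination

variable {n : ℕ} {I : OSMInstance n} {μ μ' : Finset (Fin n × Fin n)} {i : Fin n}

/-- `μ'` is a Pareto improvement of `μ`: the relation excluded by `ParetoOptimal`. -/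
def ParetoDominates (I : OSMInstance n) (μ' μ : Finset (Fin n × Fin n)) : Prop :=
  (∀ i, I.WeakImprove μ' μ i) ∧ ∃ i, I.StrictImprove μ' μ i

theorem WeakImprove.agentRank_le (hμ : I.IsMatching μ) (hμ' : I.IsMatching μ')
    (hi : I.WeakImprove μ' μ i) : I.agentRank μ' i ≤ I.agentRank μ i := by
  rcases hi with hi | ⟨h, h', hh, hh', hp⟩
  · exact agentRank_of_unmatched hi ▸ hμ'.agentRank_le i
  · rw [hμ.agentRank_eq hh, hμ'.agentRank_eq hh']
    exact edgeRank_le_of_pref (hμ.1 _ hh) (hμ'.1 _ hh') hp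

theorem StrictImprove.agentRank_lt (hμ : I.IsMatching μ) (hμ' : I.IsMatching μ')
    (hi : I.StrictImprove μ' μ i) : I.agentRank μ' i < I.agentRank μ i := by
  rcases hi with ⟨hi, h', hh'⟩ | ⟨h, h', hh, hh', hp⟩
  · rw [agentRank_of_unmatched hi, hμ'.agentRank_eq hh']
    exact Nat.lt_succ_of_le (edgeRank_le (hμ'.1 _ hh'))
  · rw [hμ.agentRank_eq hh, hμ'.agentRank_eq hh']
    exact edgeRank_lt_of_strictPref (hμ.1 _ hh) (hμ'.1 _ hh') hp

theorem ParetoDominates.agentRank_lt (hμ : I.IsMatching μ) (hμ' : I.IsMatching μ')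
    (h : I.ParetoDominates μ' μ) : I.agentRank μ' < I.agentRank μ :=
  Pi.lt_def.mpr ⟨fun i => (h.1 i).agentRank_le hμ hμ', h.2.imp fun _ hi => hi.agentRank_lt hμ hμ'⟩

theorem IsMatching.card_le_card_of_agentRank_le (hμ : I.IsMatching μ) (hμ' : I.IsMatching μ')
    (hle : I.agentRank μ' ≤ I.agentRank μ) : #μ ≤ #μ' := by
  have hunmatched : #{i | I.agentRank μ' i = n + 1} ≤ #{i | I.agentRank μ i = n + 1} :=
    card_le_card <| monotone_filter_right _ fun i _ hi =>
      (hμ.agentRank_le i).antisymm (hi ▸ hle i)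
  have hcard := hμ.card_add_card_unmatched
  have hcard' := hμ'.card_add_card_unmatched
  omega

theorem RankMaximal.paretoOptimal (h : I.RankMaximal μ) : I.ParetoOptimal μ := by
  refine ⟨h.1, fun ⟨μ', hμ', hdom⟩ => ?_⟩
  obtain ⟨i, hi, heq, hlt⟩ := exists_card_fiber_lt (ParetoDominates.agentRank_lt h.1 hμ' hdom)
  have hpos := I.agentRank_pos μ' i
  have hle := h.1.agentRank_le i
  refine not_lexLe_of_lt (k := I.agentRank μ' i - 1) (by omega) (fun j hj => ?_) ?_ (h.2 μ' hμ')
  · rw [h.1.sig_eq (by omega), hμ'.sig_eq (by omega), heq _ (by omega)]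
  · rw [Nat.sub_add_cancel hpos, h.1.sig_eq (by omega), hμ'.sig_eq (by omega)]
    exact_mod_cast hlt

theorem MaxCardRankMaximal.paretoOptimal (h : I.MaxCardRankMaximal μ) : I.ParetoOptimal μ := by
  refine ⟨h.1, fun ⟨μ', hμ', hdom⟩ => ?_⟩
  have hrank := ParetoDominates.agentRank_lt h.1 hμ' hdom
  rcases (h.1.card_le_card_of_agentRank_le hμ' hrank.le).lt_or_eq with hcard | hcard
  · exact not_lexLe_of_lt n.succ_pos (by simp) (by simpa using hcard) (h.2 μ' hμ')
  · obtain ⟨i, hi, heq, hlt⟩ := exists_card_fiber_lt hrank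
    have hpos := I.agentRank_pos μ' i
    have hle := h.1.agentRank_le i
    refine not_lexLe_of_lt (k := I.agentRank μ' i) (by omega) (fun j hj => ?_) ?_ (h.2 μ' hμ')
    · rw [hcard, h.1.sig_eq (by omega), hμ'.sig_eq (by omega), heq _ hj]
    · rw [if_neg hpos.ne', if_neg hpos.ne', h.1.sig_eq (by omega), hμ'.sig_eq (by omega)]
      exact_mod_cast hlt

theorem IsMatching.fair_tuple_eq (hμ : I.IsMatching μ) (j : ℕ) :
    (if j = 0 then (#μ : ℤ) else -I.sig μ (n + 1 - j)) =
      (if j = 0 then (n : ℤ) else 0) - #{i | I.agentRank μ i = n + 1 - j} := by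
  split
  · next hj =>
    have hcard := hμ.card_add_card_unmatched
    simp only [hj, Nat.sub_zero]
    omega
  · rw [hμ.sig_eq (by omega), zero_sub]

theorem FairMatching.paretoOptimal (h : I.FairMatching μ) : I.ParetoOptimal μ := by
  refine ⟨h.1, fun ⟨μ', hμ', hdom⟩ => ?_⟩
  obtain ⟨i, -, heq, hlt⟩ := exists_card_fiber_gt (ParetoDominates.agentRank_lt h.1 hμ' hdom)
  have hpos := I.agentRank_pos μ i
  have hlex := h.2 μ' hμ'
  simp only [h.1.fair_tuple_eq, hμ'.fair_tuple_eq] at hlex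
  refine not_lexLe_of_lt (k := n + 1 - I.agentRank μ i) (by omega) (fun j hj => ?_) ?_ hlex
  · rw [heq _ (by omega)]
  · rw [Nat.sub_sub_self (h.1.agentRank_le i)]
    omega

end Domination

end OSMInstance

theorem SatisfiesProp.paretoOptimal {n : ℕ} {X : MatchProp} {I : OSMInstance n}
    {μ : Finset (Fin n × Fin n)} (h : SatisfiesProp X I μ) : I.ParetoOptimal μ := by
  cases X with
  | po => exact h
  | rm => exact OSMInstance.RankMaximal.paretoOptimal h
  | mcrm => exact OSMInstance.MaxCardRankMaximal.paretoOptimal h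
  | fair => exact OSMInstance.FairMatching.paretoOptimal h

namespace OSMInstance

section Reassign

variable {n : ℕ} {I : OSMInstance n} {μ : Finset (Fin n × Fin n)} {C : Finset (Fin n)}
  {t : Fin n → Fin n}

/-- The allocation in which every agent `i ∈ C` drops its object in `μ` and takes `t i`, the other
agents keeping theirs. -/
def reassign (μ : Finset (Fin n × Fin n)) (C : Finset (Fin n)) (t : Fin n → Fin n) :
    Finset (Fin n × Fin n) :=
  {e | if e.1 ∈ C then e.2 = t e.1 else e ∈ μ}

theorem mem_reassign {e : Fin n × Fin n} :
    e ∈ reassign μ C t ↔ if e.1 ∈ C then e.2 = t e.1 else e ∈ μ :=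
  mem_filter_univ e

theorem IsMatching.reassign (hμ : I.IsMatching μ) (ht : ∀ i ∈ C, t i ∈ I.accept i)
    (hinj : Set.InjOn t C) (hclosed : ∀ i ∈ C, ∀ k, (k, t i) ∈ μ → k ∈ C) :
    I.IsMatching (reassign μ C t) := by
  obtain ⟨hacc, hagent, hobj⟩ := hμ
  refine ⟨fun e he => ?_, fun e he e' he' hee => ?_, fun e he e' he' hee => ?_⟩
  · grind [mem_reassign]
  · grind [mem_reassign]
  · rw [mem_reassign] at he he'
    split at he <;> split at he'
    · next hC hC' => exact Prod.ext (hinj hC hC' (he ▸ he' ▸ hee)) hee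
    · next hC hC' => exact absurd (hclosed e.1 hC e'.1 (he ▸ hee ▸ he')) hC'
    · next hC hC' => exact absurd (hclosed e'.1 hC' e.1 (he' ▸ hee ▸ he)) hC
    · exact hobj e he e' he' hee

theorem IsMatching.paretoDominates_reassign (hμ : I.IsMatching μ) (hC : C.Nonempty)
    (hbetter : ∀ i ∈ C, ∀ h, (i, h) ∈ μ → I.strictPref i (t i) h) :
    I.ParetoDominates (OSMInstance.reassign μ C t) μ := by
  refine ⟨fun i => or_iff_not_imp_left.mpr fun hi => ?_, ?_⟩
  · obtain ⟨h, hh⟩ : ∃ h, (i, h) ∈ μ := by simpa [Unmatched] using hi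
    by_cases hiC : i ∈ C
    · exact ⟨h, t i, hh, by simp [mem_reassign, hiC], (hbetter i hiC h hh).1⟩
    · exact ⟨h, h, hh, by simpa [mem_reassign, hiC], I.pref_refl _ _ (hμ.1 _ hh)⟩
  · obtain ⟨i, hi⟩ := hC
    have hmem : (i, t i) ∈ OSMInstance.reassign μ C t := by simp [mem_reassign, hi]
    by_cases hun : I.Unmatched μ i
    · exact ⟨i, Or.inl ⟨hun, t i, hmem⟩⟩
    · obtain ⟨h, hh⟩ : ∃ h, (i, h) ∈ μ := by simpa [Unmatched] using hun
      exact ⟨i, Or.inr ⟨h, t i, hh, hmem, hbetter i hi h hh⟩⟩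

theorem IsMatching.exists_closed_injOn [Nonempty (Fin n)] (hμ : I.IsMatching μ)
    (t : Fin n → Fin n) :
    ∃ C : Finset (Fin n), C.Nonempty ∧ Set.InjOn t C ∧
      ∀ i ∈ C, ∀ k, (k, t i) ∈ μ → k ∈ C := by
  by_cases hfree : ∃ i, ∀ k, (k, t i) ∉ μ
  · obtain ⟨i, hi⟩ := hfree
    exact ⟨{i}, singleton_nonempty i, by simp, by simp [hi]⟩
  · push Not at hfree
    choose holder hholder using hfree
    have hunique (i k : Fin n) (hk : (k, t i) ∈ μ) : k = holder i :=
      congrArg Prod.fst (hμ.2.2 _ hk _ (hholder i) rfl)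
    have hbij := Function.bijOn_periodicPts (f := holder)
    refine ⟨(Function.periodicPts holder).toFinset,
      Set.toFinset_nonempty.mpr (periodicPts_nonempty holder), fun i hi j hj hij => ?_,
      fun i hi k hk => ?_⟩
    · exact hbij.injOn (by simpa using hi) (by simpa using hj) (hunique j _ (hij ▸ hholder i))
    · simpa [hunique i k hk] using hbij.mapsTo (by simpa using hi)

theorem ParetoOptimal.exists_favourite [Nonempty (Fin n)] (hμ : I.ParetoOptimal μ) :
    ∃ e ∈ μ, ∀ h ∈ I.accept e.1, I.pref e.1 e.2 h := by
  by_contra! hnot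
  choose t ht hfav using I.exists_favourite
  obtain ⟨C, hC, hinj, hclosed⟩ := hμ.1.exists_closed_injOn t
  have hbetter (i h : Fin n) (hh : (i, h) ∈ μ) : I.strictPref i (t i) h := by
    have hacc := hμ.1.1 _ hh
    refine ⟨hfav i h hacc, fun hp => ?_⟩
    obtain ⟨h', hh', hnp⟩ := hnot _ hh
    exact hnp (I.pref_trans i h (t i) h' hacc (ht i) hh' hp (hfav i h' hh'))
  exact hμ.2 ⟨_, hμ.1.reassign (fun i _ => ht i) hinj hclosed,
    hμ.1.paretoDominates_reassign hC fun i _ => hbetter i⟩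

end Reassign

section Welfare

variable {n : ℕ} {I : OSMInstance n} {μ μ' : Finset (Fin n × Fin n)} {v : Fin n → Fin n → ℝ}

theorem IsMatching.sw_le_sum (hμ : I.IsMatching μ) {w : Fin n → ℝ} (hw : ∀ h, 0 ≤ w h)
    (hvw : ∀ e ∈ μ, v e.1 e.2 ≤ w e.2) : I.SW v μ ≤ ∑ h, w h :=
  calc I.SW v μ ≤ ∑ e ∈ μ, w e.2 := sum_le_sum hvw
    _ = ∑ h ∈ μ.image Prod.snd, w h := (sum_image hμ.2.2).symm
    _ ≤ ∑ h, w h := sum_le_univ_sum_of_nonneg hw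

theorem IsMatching.sw_le_card (hμ : I.IsMatching μ) (hv : I.Consistent v) : I.SW v μ ≤ n := by
  simpa using hμ.sw_le_sum (fun _ => zero_le_one) fun e _ => (hv.1 e.1 e.2).2

theorem ParetoOptimal.one_le_sw [Nonempty (Fin n)] (hμ : I.ParetoOptimal μ)
    (hv : I.Consistent v) (hur : I.UnitRange v) : 1 ≤ I.SW v μ := by
  obtain ⟨e, he, hfav⟩ := hμ.exists_favourite
  obtain ⟨h, hh, hone⟩ := (hur e.1).1
  calc 1 = v e.1 h := hone.symm
    _ ≤ v e.1 e.2 := (hv.2.2 _ _ _ (hμ.1.1 e he) hh).mp (hfav h hh)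
    _ ≤ I.SW v μ :=
      single_le_sum (f := fun e : Fin n × Fin n => v e.1 e.2) (fun e _ => (hv.1 e.1 e.2).1) he

theorem ParetoOptimal.sw_le_mul_sw (hμ : I.ParetoOptimal μ) (hμ' : I.IsMatching μ')
    (hv : I.Consistent v) (hur : I.UnitRange v) : I.SW v μ' ≤ n * I.SW v μ := by
  rcases isEmpty_or_nonempty (Fin n) with _ | _
  · simp [SW, eq_empty_of_isEmpty]
  · exact (hμ'.sw_le_card hv).trans
      (le_mul_of_one_le_right n.cast_nonneg (hμ.one_le_sw hv hur))

theorem Consistent.unitRange (hv : I.Consistent v) (hone : ∀ i, ∃ h ∈ I.accept i, v i h = 1)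
    (hzero : ∀ i, ∃ h ∈ I.accept i, v i h = 0) : I.UnitRange v := by
  intro i
  obtain ⟨h, hh, hvh⟩ := hone i
  obtain ⟨h', hh', hvh'⟩ := hzero i
  refine ⟨hone i, hzero i, h, hh, h', hh', ?_⟩
  rw [strictPref, hv.2.2 i h h' hh hh', hv.2.2 i h' h hh' hh, hvh, hvh']
  norm_num

end Welfare

section PerfectMatching

variable {n : ℕ} {I : OSMInstance n} {μ μ' : Finset (Fin n × Fin n)}

theorem IsMatching.image_snd_eq_univ (hμ : I.IsMatching μ) (hcard : #μ = n) :
    μ.image Prod.snd = univ := by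
  rw [← card_eq_iff_eq_univ, Fintype.card_fin, card_image_of_injOn hμ.2.2, hcard]

theorem IsMatching.card_le (hμ : I.IsMatching μ) : #μ ≤ n :=
  Nat.le.intro hμ.card_add_card_unmatched

theorem IsMatching.sig_le_sig (hrank : ∀ i j h, I.edgeRank (i, h) = I.edgeRank (j, h))
    (hμ' : I.IsMatching μ') (hμ : I.IsMatching μ) (hcard : #μ = n) (r : ℕ) :
    I.sig μ' r ≤ I.sig μ r := by
  have hholder (h : Fin n) : ∃ i, (i, h) ∈ μ := by
    simpa using (hμ.image_snd_eq_univ hcard).ge (mem_univ h)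
  choose holder hholder using hholder
  refine Int.ofNat_le.mpr (card_le_card_of_injOn (fun e => (holder e.2, e.2)) (fun e he => ?_)
    fun e he e' he' hee => ?_)
  · exact mem_filter.mpr ⟨hholder e.2, (hrank _ e.1 e.2).trans (mem_filter.mp he).2⟩
  · exact hμ'.2.2 e (mem_filter.mp he).1 e' (mem_filter.mp he').1 (Prod.mk.inj hee).2

theorem IsMatching.satisfiesProp_of_card_eq
    (hrank : ∀ i j h, I.edgeRank (i, h) = I.edgeRank (j, h)) (hμ : I.IsMatching μ)
    (hcard : #μ = n) (X : MatchProp) : SatisfiesProp X I μ := by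
  have hsig {μ' : Finset (Fin n × Fin n)} (hμ' : I.IsMatching μ') (r : ℕ) :
      I.sig μ' r ≤ I.sig μ r := hμ'.sig_le_sig hrank hμ hcard r
  have hrm : I.RankMaximal μ := ⟨hμ, fun μ' hμ' => lexLe_of_le fun j _ => hsig hμ' (j + 1)⟩
  cases X with
  | po => exact hrm.paretoOptimal
  | rm => exact hrm
  | mcrm =>
    refine ⟨hμ, fun μ' hμ' => lexLe_of_le fun j _ => ?_⟩
    split
    · exact_mod_cast hμ'.card_le.trans_eq hcard.symm
    · exact hsig hμ' j
  | fair =>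
    refine ⟨hμ, fun μ' hμ' => ?_⟩
    rcases hμ'.card_le.lt_or_eq with hlt | heq
    · exact Or.inr ⟨0, n.succ_pos, by simp, by simpa [hcard] using hlt⟩
    · have hsig_eq (r : ℕ) : I.sig μ' r = I.sig μ r :=
        (hsig hμ' r).antisymm (hμ.sig_le_sig hrank hμ' heq r)
      exact Or.inl fun j _ => by simp only [hcard, heq, hsig_eq]

end PerfectMatching

section Assignment

variable {n : ℕ} (τ : Equiv.Perm (Fin n))

/-- The perfect matching that gives each object `h` to the agent `τ h`. -/
def assignment : Finset (Fin n × Fin n) :=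
  univ.image fun h => (τ h, h)

theorem mem_assignment {e : Fin n × Fin n} : e ∈ assignment τ ↔ τ e.2 = e.1 := by
  simp [assignment, Prod.ext_iff]

theorem injective_prodMk_self : Function.Injective fun h => (τ h, h) :=
  Function.LeftInverse.injective (g := Prod.snd) fun _ => rfl

theorem card_assignment : #(assignment τ) = n := by
  rw [assignment, card_image_of_injective _ (injective_prodMk_self τ), card_univ, Fintype.card_fin]

theorem sw_assignment (I : OSMInstance n) (v : Fin n → Fin n → ℝ) :
    I.SW v (assignment τ) = ∑ h, v (τ h) h :=
  sum_image (injective_prodMk_self τ).injOn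

theorem isMatching_assignment {I : OSMInstance n} (hacc : ∀ h, h ∈ I.accept (τ h)) :
    I.IsMatching (assignment τ) := by
  simp only [IsMatching, mem_assignment]
  refine ⟨fun e he => he ▸ hacc e.2, fun e he e' he' heq => ?_, fun e he e' he' heq => ?_⟩
  · exact Prod.ext heq (τ.injective (he.trans (heq.trans he'.symm)))
  · exact Prod.ext (he.symm.trans ((congrArg τ heq).trans he')) heq

end Assignment

section CommonPreference

variable {n : ℕ} {α : Type*} [LinearOrder α]

/-- The instance in which every agent accepts all objects and ranks them by decreasing `u`. -/
def commonPreference (u : Fin n → α) : OSMInstance n where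
  accept _ := univ
  accept_nonempty i := ⟨i, mem_univ i⟩
  pref _ h h' := u h' ≤ u h
  pref_refl _ _ _ := le_rfl
  pref_trans _ _ _ _ _ _ _ h₁₂ h₂₃ := h₂₃.trans h₁₂
  pref_total _ h₁ h₂ _ _ := le_total (u h₂) (u h₁)

theorem edgeRank_commonPreference_congr (u : Fin n → α) (i j h : Fin n) :
    (commonPreference u).edgeRank (i, h) = (commonPreference u).edgeRank (j, h) :=
  rfl

theorem consistent_commonPreference (u : Fin n → α) {φ : Fin n → α → ℝ}
    (hφ : ∀ i, StrictMono (φ i)) (hmem : ∀ i a, φ i a ∈ Set.Icc 0 1) :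
    (commonPreference u).Consistent fun i h => φ i (u h) :=
  ⟨fun i h => hmem i (u h), fun _ h hh => absurd (mem_univ h) hh,
    fun i _ _ _ _ => (hφ i).le_iff_le.symm⟩

theorem satisfiesProp_assignment (u : Fin n → α) (τ : Equiv.Perm (Fin n)) (X : MatchProp) :
    SatisfiesProp X (commonPreference u) (assignment τ) :=
  (isMatching_assignment τ fun h => mem_univ h).satisfiesProp_of_card_eq
    (edgeRank_commonPreference_congr u) (card_assignment τ) X

end CommonPreference

section Tiers

variable {n : ℕ} {u : Fin n → Fin 3} {x : Fin n → ℝ} {μ : Finset (Fin n × Fin n)}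

/-- The valuations of objects in three tiers `u h = 0, 1, 2` in which agent `i` values the bottom,
middle and top objects at `0`, `x i` and `1`. -/
def tierValuation (u : Fin n → Fin 3) (x : Fin n → ℝ) (i h : Fin n) : ℝ :=
  ![0, x i, 1] (u h)

theorem consistent_tierValuation (u : Fin n → Fin 3) (hx : ∀ i, x i ∈ Set.Ioo 0 1) :
    (commonPreference u).Consistent (tierValuation u x) := by
  refine consistent_commonPreference u (φ := fun i => ![0, x i, 1]) (fun i => ?_) fun i a => ?_
  · simpa [Fin.strictMono_iff_lt_succ, Fin.forall_fin_two] using hx i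
  · have := hx i
    fin_cases a <;> simp [this.1.le, this.2.le]

theorem unitRange_tierValuation (htop : ∃ h, u h = 2) (hbot : ∃ h, u h = 0)
    (hx : ∀ i, x i ∈ Set.Ioo 0 1) : (commonPreference u).UnitRange (tierValuation u x) := by
  obtain ⟨a, ha⟩ := htop
  obtain ⟨b, hb⟩ := hbot
  exact (consistent_tierValuation u hx).unitRange
    (fun i => ⟨a, mem_univ a, by simp [tierValuation, ha]⟩)
    fun i => ⟨b, mem_univ b, by simp [tierValuation, hb]⟩

theorem sw_tierValuation_le (hμ : (commonPreference u).IsMatching μ)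
    (hlow : ∀ e ∈ μ, u e.2 = 1 → x e.1 ≤ (n : ℝ)⁻¹) :
    (commonPreference u).SW (tierValuation u x) μ ≤ #{h | u h = 2} + 1 := by
  calc (commonPreference u).SW (tierValuation u x) μ
      ≤ ∑ h, ((if u h = 2 then 1 else 0) + (n : ℝ)⁻¹) := by
        refine hμ.sw_le_sum (fun h => by positivity) fun e he => ?_
        have hmid := hlow e he
        unfold tierValuation
        generalize u e.2 = a at hmid
        fin_cases a <;> simp_all
    _ = #{h | u h = 2} + n * (n : ℝ)⁻¹ := by simp [sum_add_distrib]
    _ ≤ #{h | u h = 2} + 1 := by gcongr; exact mul_inv_le_one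

theorem card_mul_le_sw_assignment (hx : ∀ i, 0 ≤ x i) {τ : Equiv.Perm (Fin n)} {a : ℝ}
    (hτ : ∀ h, u h = 1 → a ≤ x (τ h)) :
    #{h | u h = 1} * a ≤ (commonPreference u).SW (tierValuation u x) (assignment τ) := by
  rw [sw_assignment]
  calc #{h | u h = 1} * a = #{h | u h = 1} • a := (nsmul_eq_mul _ _).symm
    _ ≤ ∑ h with u h = 1, tierValuation u x (τ h) h := by
        refine card_nsmul_le_sum _ _ _ fun h hh => ?_
        replace hh : u h = 1 := by simpa using hh
        simpa [tierValuation, hh] using hτ h hh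
    _ ≤ ∑ h, tierValuation u x (τ h) h := by
        refine sum_le_univ_sum_of_nonneg fun h => ?_
        unfold tierValuation
        generalize u h = a
        fin_cases a <;> simp [hx]

theorem exists_card_tiers {m : ℕ} (hm : m + 2 ≤ n) :
    ∃ u : Fin n → Fin 3, #{h | u h = 2} = 1 ∧ #{h | u h = 1} = m ∧ ∃ h, u h = 0 := by
  refine ⟨fun h => if h.1 = 0 then 2 else if h.1 ≤ m then 1 else 0, ?_, ?_, ⟨m + 1, by omega⟩, ?_⟩
  · refine card_eq_one.mpr ⟨⟨0, by omega⟩, ?_⟩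
    ext h
    simp only [mem_filter_univ, mem_singleton, Fin.ext_iff]
    split_ifs <;> simp_all
  · trans #(Ioc (⟨0, by omega⟩ : Fin n) ⟨m, by omega⟩)
    · congr 1
      ext h
      simp only [mem_filter_univ, mem_Ioc, Fin.lt_def, Fin.le_def]
      split_ifs <;> simp_all; omega
    · simp
  · simp

theorem IsMatching.exists_perm_forall_notMem {I : OSMInstance n} (hμ : I.IsMatching μ)
    {M : Finset (Fin n)} (hM : 2 * #M ≤ n) :
    ∃ τ : Equiv.Perm (Fin n), ∀ h ∈ M, ∀ h' ∈ M, (τ h, h') ∉ μ := by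
  set holders := ({e ∈ μ | e.2 ∈ M} : Finset _).image Prod.fst
  have hcard : #holders ≤ #M := card_image_le.trans <|
    card_le_card_of_injOn Prod.snd (fun e he => (mem_filter.mp he).2) fun e he e' he' =>
      hμ.2.2 e (mem_filter.mp he).1 e' (mem_filter.mp he').1
  obtain ⟨A, hA, hAcard⟩ : ∃ A ⊆ holdersᶜ, #A = #M :=
    exists_subset_card_eq (by rw [card_compl, Fintype.card_fin]; omega)
  obtain ⟨τ, hτ⟩ := Equiv.Perm.exists_map_finset_eq M A hAcard.symm
  refine ⟨τ, fun h hh h' hh' hmem => ?_⟩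
  have hfree : τ h ∈ holdersᶜ := hA (hτ ▸ mem_map_of_mem _ hh)
  exact mem_compl.mp hfree (mem_image.mpr ⟨_, mem_filter.mpr ⟨hmem, hh'⟩, rfl⟩)

theorem exists_valuation_sw_le_two (htop : #{h | u h = 2} = 1) (hbot : ∃ h, u h = 0)
    (hmid : 2 * #{h | u h = 1} ≤ n) (hμ : (commonPreference u).IsMatching μ) :
    ∃ v, (commonPreference u).Consistent v ∧ (commonPreference u).UnitRange v ∧
      (commonPreference u).SW v μ ≤ 2 ∧
      ∃ τ, #{h | u h = 1} * (1 / 2) ≤ (commonPreference u).SW v (assignment τ) := by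
  obtain ⟨t, ht⟩ : ∃ t, u t = 2 := by
    by_contra! hne
    simp [hne] at htop
  have hn : (1 : ℝ) < n := by
    obtain ⟨b, hb⟩ := hbot
    have hne : t ≠ b := by
      rintro rfl
      simp [ht] at hb
    exact_mod_cast Fintype.card_fin n ▸ Fintype.one_lt_card_iff.mpr ⟨t, b, hne⟩
  obtain ⟨τ, hτ⟩ := hμ.exists_perm_forall_notMem hmid
  simp only [mem_filter_univ] at hτ
  set x : Fin n → ℝ := fun i =>
    if ∃ h, u h = 1 ∧ (i, h) ∈ μ then (n : ℝ)⁻¹ else 1 / 2 with hx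
  have hx_mem (i : Fin n) : x i ∈ Set.Ioo 0 1 := by
    simp only [hx]
    split_ifs
    · exact ⟨by positivity, inv_lt_one_of_one_lt₀ hn⟩
    · norm_num
  refine ⟨tierValuation u x, consistent_tierValuation u hx_mem,
    unitRange_tierValuation ⟨t, ht⟩ hbot hx_mem, ?_, τ,
    card_mul_le_sw_assignment (fun i => (hx_mem i).1.le) fun h hh => ?_⟩
  · refine (sw_tierValuation_le hμ fun e he hmid => ?_).trans_eq (by rw [htop]; norm_num)
    exact (if_pos ⟨e.2, hmid, he⟩).le
  · exact (if_neg fun ⟨h', hh', hmem⟩ => hτ h hh h' hh' hmem).ge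

end Tiers

theorem exists_instance_forall_matching_mul_sw_le {n : ℕ} (hn : 3 ≤ n) :
    ∃ I : OSMInstance n, ∀ μ, I.IsMatching μ →
      ∃ v, I.Consistent v ∧ I.UnitRange v ∧
        ∃ μ', (∀ X, SatisfiesProp X I μ') ∧ 1 / 12 * (n : ℝ) * I.SW v μ ≤ I.SW v μ' := by
  obtain ⟨u, htop, hmid, hbot⟩ := exists_card_tiers (m := n / 2) (n := n) (by omega)
  refine ⟨commonPreference u, fun μ hμ => ?_⟩
  obtain ⟨v, hv, hur, hle, τ, hge⟩ := exists_valuation_sw_le_two htop hbot (by omega) hμ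
  refine ⟨v, hv, hur, assignment τ, satisfiesProp_assignment u τ, ?_⟩
  have hn_le : (n : ℝ) ≤ 3 * (n / 2 : ℕ) := by exact_mod_cast (by omega : n ≤ 3 * (n / 2))
  calc 1 / 12 * (n : ℝ) * (commonPreference u).SW v μ ≤ 1 / 12 * n * 2 := by gcongr
    _ ≤ (n / 2 : ℕ) * (1 / 2) := by linarith
    _ ≤ (commonPreference u).SW v (assignment τ) := hmid ▸ hge

end OSMInstance

theorem ordinal_unitRange_bounds_general (X : MatchProp) :
    (∃ c : ℝ, 0 < c ∧ ∃ n₀ : ℕ, ∀ n : ℕ, n₀ ≤ n →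
      ∀ f : OSMInstance n → Finset (Fin n × Fin n), (∀ I : OSMInstance n, I.IsMatching (f I)) →
        ∃ I : OSMInstance n, ∃ v : Fin n → Fin n → ℝ,
          I.Consistent v ∧ I.UnitRange v ∧
          ∃ μ', SatisfiesProp X I μ' ∧ c * (n : ℝ) * I.SW v (f I) ≤ I.SW v μ') ∧
    (∀ n : ℕ, ∀ I : OSMInstance n, ∀ μ, SatisfiesProp X I μ →
      ∀ v : Fin n → Fin n → ℝ, I.Consistent v → I.UnitRange v →
      ∀ μ', I.IsMatching μ' → I.SW v μ' ≤ (n : ℝ) * I.SW v μ) := by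
  refine ⟨⟨1 / 12, by norm_num, 3, fun n hn f hf => ?_⟩, fun n I μ hμ v hv hur μ' hμ' =>
    hμ.paretoOptimal.sw_le_mul_sw hμ' hv hur⟩
  obtain ⟨I, hI⟩ := OSMInstance.exists_instance_forall_matching_mul_sw_le hn
  obtain ⟨v, hv, hur, μ', hμ', hle⟩ := hI (f I) (hf I)
  exact ⟨I, v, hv, hur, μ', hμ' X, hle⟩

/-- (i) every deterministic ordinal algorithm that always outputs a
matching satisfying `X` loses a factor of `Ω(n)` in welfare on some instance with
unit-range valuations, and (ii) this is asymptotically tight: any matching satisfying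
`X` achieves an `n`-approximation to the optimal welfare among matchings satisfying
`X`. -/
theorem ordinal_unitRange_bounds (X : MatchProp) :
    (∃ c : ℝ, 0 < c ∧ ∃ n₀ : ℕ, ∀ n : ℕ, n₀ ≤ n →
      ∀ f : OSMInstance n → Finset (Fin n × Fin n),
        (∀ I : OSMInstance n, SatisfiesProp X I (f I)) →
        ∃ I : OSMInstance n, ∃ v : Fin n → Fin n → ℝ,
          I.Consistent v ∧ I.UnitRange v ∧
          ∃ μ', SatisfiesProp X I μ' ∧
            c * (n : ℝ) * I.SW v (f I) ≤ I.SW v μ') ∧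
    (∀ n : ℕ, 2 ≤ n → ∀ I : OSMInstance n,
      ∀ μ, SatisfiesProp X I μ →
      ∀ v : Fin n → Fin n → ℝ, I.Consistent v → I.UnitRange v →
      ∀ μ', SatisfiesProp X I μ' →
        I.SW v μ' ≤ (n : ℝ) * I.SW v μ) := by
  obtain ⟨⟨c, hc, n₀, hlower⟩, hupper⟩ := ordinal_unitRange_bounds_general X
  exact ⟨⟨c, hc, n₀, fun n hn f hf => hlower n hn f fun I => (hf I).paretoOptimal.1⟩,
    fun n _ I μ hμ v hv hur μ' hμ' => hupper n I μ hμ v hv hur μ' hμ'.paretoOptimal.1⟩
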